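/- Let (ρ,σ) be a direction with ρ > 0 and ρ + σ < 0, let R, G₁ ∈ K[x,y] be nonzero (ρ,σ)-homogeneous polynomials, and let i ≥ 0 be an integer with [R,G₁] = R^i. Set u := v_{ρ,σ}(R) and v := v_{ρ,σ}(G₁), and define univariate polynomials r, g ∈ K[z] by r := Σ_{(α,β)∈Supp(R)} R_{α,β}·z^β and g := Σ_{(α,β)∈Supp(G₁)} (G₁)_{α,β}·z^β, where R_{α,β} and (G₁)_{α,β} are the coefficients of x^α y^β (these are well defined: by homogeneity and ρ ≠ 0 the second coordinate determines the point of the support). Then ρ·r^i = u·g′·r − v·r′·g holds in K[z]. -/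

import Mathlib

/-!
Dehomogenizing by `x = 1`, `y = z` is a ring homomorphism which turns `∂_y` into `d/dz`, and a
homogeneous `P` into its associated univariate polynomial `p`. Euler's identity
`ρ x ∂ₓP + σ y ∂_yP = v(P) P` becomes `ρ (∂ₓP)(1, z) = v(P) p - σ z p'`, which eliminates the
`x`-derivatives from the dehomogenized bracket; the two terms in `σ z r' g'` cancel.
-/

open MvPolynomial

noncomputable section

variable {K : Type*} [Field K] [CharZero K]

/-- The support of `P` as a set of pairs `(i,j)` of exponents of `x^i y^j`. -/
def Supp (P : MvPolynomial (Fin 2) K) : Set (ℕ × ℕ) :=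
  {p | MvPolynomial.coeff (Finsupp.single 0 p.1 + Finsupp.single 1 p.2) P ≠ 0}

/-- The Jacobian bracket `[P,Q] = ∂ₓP ∂_yQ − ∂ₓQ ∂_yP`. -/
def Jb (P Q : MvPolynomial (Fin 2) K) : MvPolynomial (Fin 2) K :=
  pderiv 0 P * pderiv 1 Q - pderiv 0 Q * pderiv 1 P

/-- The `(ρ,σ)`-degree `v_{ρ,σ}(P)` (the maximum of `ρi+σj` on the support). -/
def wdeg (ρ σ : ℤ) (P : MvPolynomial (Fin 2) K) : ℤ :=
  sSup {d : ℤ | ∃ p ∈ Supp P, d = ρ * (p.1 : ℤ) + σ * (p.2 : ℤ)}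

/-- The support of the `(ρ,σ)`-leading form of `P`. -/
def LeadSupp (ρ σ : ℤ) (P : MvPolynomial (Fin 2) K) : Set (ℕ × ℕ) :=
  {p | p ∈ Supp P ∧ ρ * (p.1 : ℤ) + σ * (p.2 : ℤ) = wdeg ρ σ P}

/-- `P` is `(ρ,σ)`-homogeneous. -/
def IsHomog (ρ σ : ℤ) (P : MvPolynomial (Fin 2) K) : Prop :=
  ∀ p ∈ Supp P, ∀ q ∈ Supp P,
    ρ * (p.1 : ℤ) + σ * (p.2 : ℤ) = ρ * (q.1 : ℤ) + σ * (q.2 : ℤ)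

/-- `P` is a monomial: its support has at most one point. -/
def IsMonomial (P : MvPolynomial (Fin 2) K) : Prop := (Supp P).Subsingleton

/-- `e` is the point `en_{ρ,σ}(P)`: the point of the support of the leading form
with largest second coordinate. -/
def IsEn (ρ σ : ℤ) (P : MvPolynomial (Fin 2) K) (e : ℕ × ℕ) : Prop :=
  e ∈ LeadSupp ρ σ P ∧ ∀ q ∈ LeadSupp ρ σ P, q.2 ≤ e.2

/-- `e` is the point `st_{ρ,σ}(P)`: the point of the support of the leading form
with smallest second coordinate. -/
def IsSt (ρ σ : ℤ) (P : MvPolynomial (Fin 2) K) (e : ℕ × ℕ) : Prop :=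
  e ∈ LeadSupp ρ σ P ∧ ∀ q ∈ LeadSupp ρ σ P, e.2 ≤ q.2

/-- The univariate polynomial `r ∈ K[z]` associated to a `(ρ,σ)`-homogeneous `P`:
`r = Σ_{(α,β) ∈ Supp P} P_{α,β} z^β`. -/
def ypoly (P : MvPolynomial (Fin 2) K) : Polynomial K :=
  ∑ m ∈ P.support, Polynomial.C (MvPolynomial.coeff m P) * Polynomial.X ^ (m 1)

section MvPolynomialDerivations

variable {R τ : Type*} [CommSemiring R] [Fintype τ]

theorem derivation_aeval_eq_sum_pderiv {A M : Type*} [CommSemiring A] [Algebra R A]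
    [AddCommMonoid M] [Module A M] [Module R M] (D : Derivation R A M) (f : τ → A)
    (P : MvPolynomial τ R) :
    D (aeval f P) = ∑ i, aeval f (pderiv i P) • D (f i) := by
  classical
  induction P using MvPolynomial.induction_on with
  | C a => simp
  | add p q hp hq => simp [hp, hq, add_smul, Finset.sum_add_distrib]
  | mul_X p j hp =>
    simp [hp, pderiv_X, Pi.single_apply, add_smul, mul_smul, Finset.sum_add_distrib,
      Finset.smul_sum, apply_ite, ite_smul]

theorem sum_weight_smul_X_mul_pderiv {S : Type*} [CommSemiring S] [Algebra S R]
    {w : τ → S} {n : S} {P : MvPolynomial τ R} (hP : P.IsWeightedHomogeneous w n) :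
    ∑ i, w i • (X i * pderiv i P) = n • P := by
  have euler_monomial : ∀ m ∈ P.support,
      ∑ i, w i • (X i * pderiv i (monomial m (coeff m P))) = n • monomial m (coeff m P) := by
    intro m hm
    have weight_eq : ∑ i, m i • w i = n := by
      rw [← hP (mem_support_iff.mp hm), Finsupp.weight_apply, Finsupp.sum_fintype _ _ (by simp)]
    simp only [X_mul_pderiv_monomial, ← weight_eq, Finset.sum_smul, smul_comm (w _), smul_assoc]
  conv_lhs => rw [P.as_sum]
  conv_rhs => rw [P.as_sum]
  simp only [map_sum, Finset.mul_sum, Finset.smul_sum]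
  rw [Finset.sum_comm]
  refine Finset.sum_congr rfl fun m hm => ?_
  rw [euler_monomial m hm]

end MvPolynomialDerivations

section Homogeneous

variable {F : Type*} [Field F] {ρ σ : ℤ} {P Q : MvPolynomial (Fin 2) F}

theorem mem_Supp_iff_coeff_ne_zero {m : Fin 2 →₀ ℕ} : (m 0, m 1) ∈ Supp P ↔ coeff m P ≠ 0 := by
  have m_eq : Finsupp.single 0 (m 0) + Finsupp.single 1 (m 1) = m := by
    rw [← Fin.sum_univ_two fun i => Finsupp.single i (m i), Finsupp.univ_sum_single]
  rw [Supp, Set.mem_ofPred, m_eq]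

theorem wdeg_eq_of_mem_Supp (hP : IsHomog ρ σ P) {p : ℕ × ℕ} (hp : p ∈ Supp P) :
    wdeg ρ σ P = ρ * p.1 + σ * p.2 := by
  have degrees_eq : {d : ℤ | ∃ q ∈ Supp P, d = ρ * q.1 + σ * q.2} = {ρ * p.1 + σ * p.2} :=
    Set.eq_singleton_iff_unique_mem.mpr ⟨⟨p, hp, rfl⟩, by rintro _ ⟨q, hq, rfl⟩; exact hP q hq p hp⟩
  rw [wdeg, degrees_eq, csSup_singleton]

theorem isWeightedHomogeneous_wdeg (hP : IsHomog ρ σ P) :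
    P.IsWeightedHomogeneous ![ρ, σ] (wdeg ρ σ P) := by
  intro m hm
  rw [wdeg_eq_of_mem_Supp hP (mem_Supp_iff_coeff_ne_zero.mpr hm), Finsupp.weight_apply,
    Finsupp.sum_fintype _ _ (by simp)]
  simp [mul_comm]

theorem ypoly_eq_aeval (P : MvPolynomial (Fin 2) F) :
    ypoly P = aeval ![1, Polynomial.X] P := by
  simp [ypoly, aeval_def, eval₂_eq']

theorem ypoly_pow (P : MvPolynomial (Fin 2) F) (n : ℕ) : ypoly (P ^ n) = ypoly P ^ n := by
  simp only [ypoly_eq_aeval, map_pow]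

theorem derivative_ypoly (P : MvPolynomial (Fin 2) F) :
    Polynomial.derivative (ypoly P) = ypoly (pderiv 1 P) := by
  simpa [ypoly_eq_aeval] using
    derivation_aeval_eq_sum_pderiv Polynomial.derivative' ![1, Polynomial.X] P

theorem ypoly_Jb (P Q : MvPolynomial (Fin 2) F) :
    ypoly (Jb P Q) = ypoly (pderiv 0 P) * Polynomial.derivative (ypoly Q)
      - ypoly (pderiv 0 Q) * Polynomial.derivative (ypoly P) := by
  rw [derivative_ypoly, derivative_ypoly]
  simp only [Jb, ypoly_eq_aeval, map_sub, map_mul]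

theorem ypoly_euler (hP : IsHomog ρ σ P) :
    (ρ : Polynomial F) * ypoly (pderiv 0 P)
        + (σ : Polynomial F) * Polynomial.X * Polynomial.derivative (ypoly P)
      = (wdeg ρ σ P : Polynomial F) * ypoly P := by
  have euler := congrArg (aeval ![(1 : Polynomial F), Polynomial.X])
    (sum_weight_smul_X_mul_pderiv (isWeightedHomogeneous_wdeg hP))
  rw [derivative_ypoly]
  simpa [ypoly_eq_aeval, mul_assoc] using euler

theorem stmt6_general (hP : IsHomog ρ σ P) (hQ : IsHomog ρ σ Q) :
    (ρ : Polynomial F) * ypoly (Jb P Q)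
      = (wdeg ρ σ P : Polynomial F) * Polynomial.derivative (ypoly Q) * ypoly P
        - (wdeg ρ σ Q : Polynomial F) * Polynomial.derivative (ypoly P) * ypoly Q := by
  rw [ypoly_Jb]
  linear_combination Polynomial.derivative (ypoly Q) * ypoly_euler hP
    - Polynomial.derivative (ypoly P) * ypoly_euler hQ

end Homogeneous

/-- Lemma "factores en jacobiano"(1): if `[R,G₁] = R^i` with `R, G₁` nonzero
`(ρ,σ)`-homogeneous, `u = v_{ρ,σ}(R)`, `v = v_{ρ,σ}(G₁)`, then
`ρ·r^i = u·g'·r − v·r'·g` in `K[z]`. -/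
theorem stmt6 (K : Type*) [Field K] [CharZero K]
    (ρ σ : ℤ) (hgcd : Int.gcd ρ σ = 1) (hρ : 0 < ρ) (hρσ : ρ + σ < 0)
    (R G₁ : MvPolynomial (Fin 2) K) (hR : R ≠ 0) (hG : G₁ ≠ 0)
    (hhomR : IsHomog ρ σ R) (hhomG : IsHomog ρ σ G₁)
    (i : ℕ) (hbr : Jb R G₁ = R ^ i) :
    (ρ : Polynomial K) * (ypoly R) ^ i
      = (wdeg ρ σ R : Polynomial K) * Polynomial.derivative (ypoly G₁) * ypoly R
        - (wdeg ρ σ G₁ : Polynomial K) * Polynomial.derivative (ypoly R) * ypoly G₁ := by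
  rw [← ypoly_pow, ← hbr]
  exact stmt6_general hhomR hhomG

end
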